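/- Let (ν_j)_{j∈J} be a family of finite signed measures on a semi-ring 𝒮. If there is a finite signed measure on 𝒮 dominating each ν_j, then μ := sup_j ν_j (defined via the partition-supremum construction) is a finite signed measure on 𝒮. -/

import Mathlib

/-!
Write `g C = sup_j ν_j C` and let `ρ A` be the supremum of the partition sums `∑_{C ∈ P} g C`.
Additivity of the dominating measure `μ` bounds every partition sum of `A` by `μ A`, and the
one-set partition bounds `ρ A` below by each `ν_j A`; hence `ρ` is real-valued on `S`.

*Finite additivity* (`isRealCharge_supR`). Let `A` be the disjoint union of `A_1, …, A_n`. Partitions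
of the `A_i` glue to a partition of `A`, which gives `∑ ρ A_i ≤ ρ A`. Conversely a partition `P`
of `A` is refined by the sets `C ∩ A_i`; since `g`, a supremum of additive functions, is
subadditive, refining increases the sum, which gives `ρ A ≤ ∑ ρ A_i`.

*Countable additivity* (`countablyAdditive_of_le`). For a fixed index `j`, the charge `ρ - ν_j` is
nonnegative and dominated by the countably additive `μ - ν_j`. A nonnegative charge `τ` dominated by
a countably additive `m` is countably additive: if `A` is the disjoint union of `(A_i)`, then
`A \ ⋃_{i < n} A_i` is a finite disjoint union of elements of `S`, so
`0 ≤ τ A - ∑_{i < n} τ (A_i) ≤ m A - ∑_{i < n} m (A_i) → 0`.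
Adding `ν_j` back shows that `ρ` is countably additive.
-/

open MeasureTheory Set
open scoped ENNReal NNReal BigOperators

namespace SignedCharges

variable {Ω : Type*}

/-- `P` is a finite partition of `A` by elements of the family `S`. -/
def IsPartition (S : Set (Set Ω)) (A : Set Ω) (P : Finset (Set Ω)) : Prop :=
  ↑P ⊆ S ∧ (P : Set (Set Ω)).PairwiseDisjoint id ∧ ⋃₀ ↑P = A

/-- The partition-supremum `μ_F` of a family `F = (ν j)` of `EReal`-valued set functions:
`μ_F(A) = sup` over finite partitions `Π` of `A` by elements of `S` of `Σ_{C ∈ Π} sup_j ν j C`. -/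
noncomputable def supFun {J : Type*} (S : Set (Set Ω)) (ν : J → Set Ω → EReal)
    (A : Set Ω) : EReal :=
  ⨆ P : Finset (Set Ω), ⨆ _ : IsPartition S A P, ∑ C ∈ P, ⨆ j, ν j C

/-- The admissibility hypothesis: `sup_j ν j A > -∞` for every `A ∈ S`. -/
def Admissible {J : Type*} (S : Set (Set Ω)) (ν : J → Set Ω → EReal) : Prop :=
  ∀ A ∈ S, ⊥ < ⨆ j, ν j A

/-- An `EReal`-valued signed charge on `S`: vanishes on `∅`, finitely additive on finite
disjoint unions within `S`, and omits at least one of the values `+∞`, `-∞` on `S`. -/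
structure IsCharge (S : Set (Set Ω)) (μ : Set Ω → EReal) : Prop where
  empty : μ ∅ = 0
  additive : ∀ (n : ℕ) (A : Fin n → Set Ω), (∀ i, A i ∈ S) →
    Pairwise (Function.onFun Disjoint A) → (⋃ i, A i) ∈ S → μ (⋃ i, A i) = ∑ i, μ (A i)
  omits : (∀ A ∈ S, μ A ≠ ⊤) ∨ (∀ A ∈ S, μ A ≠ ⊥)

/-- A finite (real-valued) signed charge on `S`. -/
structure IsRealCharge (S : Set (Set Ω)) (μ : Set Ω → ℝ) : Prop where
  empty : μ ∅ = 0
  additive : ∀ (n : ℕ) (A : Fin n → Set Ω), (∀ i, A i ∈ S) →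
    Pairwise (Function.onFun Disjoint A) → (⋃ i, A i) ∈ S → μ (⋃ i, A i) = ∑ i, μ (A i)

/-- Countable additivity for a real-valued set function (unconditional convergence). -/
def CountablyAdditiveR (S : Set (Set Ω)) (μ : Set Ω → ℝ) : Prop :=
  ∀ A : ℕ → Set Ω, (∀ n, A n ∈ S) → Pairwise (Function.onFun Disjoint A) →
    (⋃ n, A n) ∈ S → HasSum (fun n => μ (A n)) (μ (⋃ n, A n))

/-- Countable sub-additivity for an `EReal`-valued set function. -/
def CountablySubadditiveE (S : Set (Set Ω)) (μ : Set Ω → EReal) : Prop :=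
  ∀ A : ℕ → Set Ω, (∀ n, A n ∈ S) → Pairwise (Function.onFun Disjoint A) →
    (⋃ n, A n) ∈ S → μ (⋃ n, A n) ≤ ∑' n, μ (A n)

/-- Countable additivity for an `EReal`-valued set function. -/
def CountablyAdditiveE (S : Set (Set Ω)) (μ : Set Ω → EReal) : Prop :=
  ∀ A : ℕ → Set Ω, (∀ n, A n ∈ S) → Pairwise (Function.onFun Disjoint A) →
    (⋃ n, A n) ∈ S → μ (⋃ n, A n) = ∑' n, μ (A n)

/-- `μ⁺ = μ ∨ 0` : sup over finite partitions of `Σ_{C} max (μ C) 0`. -/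
noncomputable def pos (S : Set (Set Ω)) (μ : Set Ω → EReal) (A : Set Ω) : EReal :=
  ⨆ P : Finset (Set Ω), ⨆ _ : IsPartition S A P, ∑ C ∈ P, max (μ C) 0

/-- `μ⁻ = (-μ) ∨ 0` : sup over finite partitions of `Σ_{C} max (-μ C) 0`. -/
noncomputable def neg (S : Set (Set Ω)) (μ : Set Ω → EReal) (A : Set Ω) : EReal :=
  ⨆ P : Finset (Set Ω), ⨆ _ : IsPartition S A P, ∑ C ∈ P, max (-μ C) 0

/-- The variation `|μ|` : sup over finite partitions of `Σ_{C} |μ C|`. -/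
noncomputable def var (S : Set (Set Ω)) (μ : Set Ω → EReal) (A : Set Ω) : EReal :=
  ⨆ P : Finset (Set Ω), ⨆ _ : IsPartition S A P, ∑ C ∈ P, max (μ C) (-μ C)

/-- The infimum `α ∧ β` of two nonnegative charges:
inf over finite partitions of `Σ_{C} min (α C) (β C)`. -/
noncomputable def infC (S : Set (Set Ω)) (α β : Set Ω → EReal) (A : Set Ω) : EReal :=
  ⨅ P : Finset (Set Ω), ⨅ _ : IsPartition S A P, ∑ C ∈ P, min (α C) (β C)

/-- The ring generated by a semi-ring: finite unions of elements of `S`. -/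
def genRing (S : Set (Set Ω)) : Set (Set Ω) :=
  {A | ∃ P : Finset (Set Ω), ↑P ⊆ S ∧ A = ⋃₀ ↑P}

/-- Coercion of a real-valued set function to an `EReal`-valued one. -/
def toE (μ : Set Ω → ℝ) : Set Ω → EReal := fun A => (μ A : EReal)

/-- `μ` has finite variation on `S`. -/
def FiniteVar (S : Set (Set Ω)) (μ : Set Ω → ℝ) : Prop :=
  ∀ A ∈ S, var S (toE μ) A ≠ ⊤

section Helpers

variable {S : Set (Set Ω)}

/-- Additivity over a family indexed by an arbitrary finite set rather than by `Fin n`. -/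
lemma IsRealCharge.sum_finset {m : Set Ω → ℝ} (hm : IsRealCharge S m) {ι : Type*} (s : Finset ι)
    (A : ι → Set Ω) (hA : ∀ i ∈ s, A i ∈ S) (hd : (s : Set ι).PairwiseDisjoint A)
    (hU : (⋃ i ∈ s, A i) ∈ S) : m (⋃ i ∈ s, A i) = ∑ i ∈ s, m (A i) := by
  have e := s.equivFin.symm
  have hU' : (⋃ k, A (e k)) = ⋃ i ∈ s, A i := by
    rw [e.surjective.iUnion_comp (fun i : s => A i)]
    exact (Set.biUnion_eq_iUnion (s : Set ι) fun i _ => A i).symm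
  have h := hm.additive s.card (fun k => A (e k)) (fun k => hA _ (e k).2)
    (fun k l hkl => hd (e k).2 (e l).2
      (fun h => hkl (e.injective (Subtype.ext h)))) (by rw [hU']; exact hU)
  rw [hU'] at h
  rw [h, e.sum_comp (fun i : s => m (A i)), Finset.sum_coe_sort s (fun i => m (A i))]

lemma IsRealCharge.sum_partition {m : Set Ω → ℝ} (hm : IsRealCharge S m) {A : Set Ω}
    (hA : A ∈ S) {P : Finset (Set Ω)} (hP : IsPartition S A P) : m A = ∑ C ∈ P, m C := by
  obtain ⟨h1, h2, h3⟩ := hP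
  have hU : (⋃ C ∈ P, id C) = A := by rw [← h3, Set.sUnion_eq_biUnion]; rfl
  have h := hm.sum_finset P id (fun C hC => h1 hC) h2 (by rw [hU]; exact hA)
  rwa [hU] at h

lemma IsRealCharge.sub {m n : Set Ω → ℝ} (hm : IsRealCharge S m) (hn : IsRealCharge S n) :
    IsRealCharge S (fun A => m A - n A) where
  empty := by simp [hm.empty, hn.empty]
  additive k A h1 h2 h3 := by
    rw [hm.additive k A h1 h2 h3, hn.additive k A h1 h2 h3, Finset.sum_sub_distrib]

lemma isPartition_singleton {A : Set Ω} (hA : A ∈ S) : IsPartition S A {A} := by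
  refine ⟨by simpa using hA, by simp, by simp⟩

/-- The image of a disjoint family of elements of `S` is a partition of its union. Distinct indices
may share the value `∅`, which does not matter for the sums of functions vanishing at `∅`. -/
lemma isPartition_image [DecidableEq (Set Ω)] {ι : Type*} (s : Finset ι) (A : ι → Set Ω)
    (hA : ∀ i ∈ s, A i ∈ S)
    (hd : (s : Set ι).PairwiseDisjoint A) : IsPartition S (⋃ i ∈ s, A i) (s.image A) := by
  refine ⟨?_, ?_, ?_⟩
  · intro C hC
    obtain ⟨i, hi, rfl⟩ := Finset.mem_image.1 (Finset.mem_coe.1 hC)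
    exact hA i hi
  · intro C hC D hD hCD
    obtain ⟨i, hi, rfl⟩ := Finset.mem_image.1 (Finset.mem_coe.1 hC)
    obtain ⟨j, hj, rfl⟩ := Finset.mem_image.1 (Finset.mem_coe.1 hD)
    exact hd hi hj (fun h => hCD (by rw [h]))
  · rw [Finset.coe_image, Set.sUnion_image]; rfl

/-- The real-valued partition-supremum of `g`; it has the junk value `0` where the partition sums
are unbounded or where there is no partition. -/
noncomputable def supR (S : Set (Set Ω)) (g : Set Ω → ℝ) (A : Set Ω) : ℝ :=
  sSup {x | ∃ P : Finset (Set Ω), IsPartition S A P ∧ ∑ C ∈ P, g C = x}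

lemma sum_le_supR {g μ : Set Ω → ℝ} {A : Set Ω}
    (hub : ∀ P, IsPartition S A P → ∑ C ∈ P, g C ≤ μ A) {P : Finset (Set Ω)}
    (hP : IsPartition S A P) : ∑ C ∈ P, g C ≤ supR S g A :=
  le_csSup ⟨μ A, by rintro _ ⟨Q, hQ, rfl⟩; exact hub Q hQ⟩ ⟨P, hP, rfl⟩

lemma supR_le {g : Set Ω → ℝ} {A : Set Ω} (hA : A ∈ S) {c : ℝ}
    (h : ∀ P, IsPartition S A P → ∑ C ∈ P, g C ≤ c) : supR S g A ≤ c :=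
  csSup_le ⟨_, {A}, isPartition_singleton hA, rfl⟩ (by rintro _ ⟨Q, hQ, rfl⟩; exact h Q hQ)

/-- The partition-supremum of a subadditive function with bounded partition sums is additive. -/
lemma isRealCharge_supR (hS : IsSetSemiring S) {g μ : Set Ω → ℝ} (hg0 : g ∅ = 0)
    (hub : ∀ A ∈ S, ∀ P, IsPartition S A P → ∑ C ∈ P, g C ≤ μ A)
    (hsub : ∀ (n : ℕ) (A : Fin n → Set Ω), (∀ i, A i ∈ S) →
      Pairwise (Function.onFun Disjoint A) → (⋃ i, A i) ∈ S → g (⋃ i, A i) ≤ ∑ i, g (A i)) :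
    IsRealCharge S (supR S g) := by
  classical
  refine ⟨?_, ?_⟩
  · have h : ∀ P, IsPartition S ∅ P → ∑ C ∈ P, g C = 0 := by
      intro P hP
      refine Finset.sum_eq_zero fun C hC => ?_
      have : C ⊆ ∅ := hP.2.2 ▸ Set.subset_sUnion_of_mem (Finset.mem_coe.2 hC)
      rw [Set.subset_empty_iff.1 this, hg0]
    apply le_antisymm
    · exact supR_le hS.empty_mem fun P hP => (h P hP).le
    · have hp := isPartition_singleton hS.empty_mem
      rw [← h _ hp]
      exact sum_le_supR (hub ∅ hS.empty_mem) hp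
  · intro n A hA hd hU
    apply le_antisymm
    · refine supR_le hU fun P hP => ?_
      obtain ⟨h1, h2, h3⟩ := hP
      have hle : ∀ C ∈ P, g C ≤ ∑ i, g (C ∩ A i) := by
        intro C hC
        have hCU : (⋃ i, C ∩ A i) = C := by
          rw [← Set.inter_iUnion, Set.inter_eq_left, ← h3]
          exact Set.subset_sUnion_of_mem hC
        have := hsub n (fun i => C ∩ A i) (fun i => hS.inter_mem _ (h1 hC) _ (hA i))
          (fun i j hij => (hd hij).mono Set.inter_subset_right Set.inter_subset_right)
          (by rw [hCU]; exact h1 hC)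
        rwa [hCU] at this
      refine (Finset.sum_le_sum hle).trans ?_
      rw [Finset.sum_comm]
      refine Finset.sum_le_sum fun i _ => ?_
      have hdis : (P : Set (Set Ω)).PairwiseDisjoint (fun C => C ∩ A i) := fun C hC D hD hCD =>
        (h2 hC hD hCD).mono Set.inter_subset_left Set.inter_subset_left
      have hp := isPartition_image (S := S) P (fun C => C ∩ A i)
        (fun C hC => hS.inter_mem _ (h1 hC) _ (hA i)) hdis
      have hAi : (⋃ C ∈ P, C ∩ A i) = A i := by
        have : (⋃ C ∈ P, C) = ⋃ i, A i := by rw [← h3, Set.sUnion_eq_biUnion]; rfl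
        rw [← Set.iUnion₂_inter, this, Set.inter_eq_right]
        exact Set.subset_iUnion A i
      rw [hAi] at hp
      rw [← Finset.sum_image_of_disjoint (g := g) hg0 hdis]
      exact sum_le_supR (hub _ (hA i)) hp
    · refine le_of_forall_pos_le_add fun ε hε => ?_
      have hδ : 0 < ε / (n + 1) := by positivity
      have hex : ∀ i, ∃ P, IsPartition S (A i) P ∧
          supR S g (A i) - ε / (n + 1) < ∑ C ∈ P, g C := by
        intro i
        by_contra! hcon
        have := supR_le (hA i) hcon
        linarith
      choose P hP hlt using hex
      -- The partitions may share the element `∅`, so the gluing is indexed by pairs `(i, C)`.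
      let s : Finset (Σ _ : Fin n, Set Ω) := Finset.univ.sigma P
      have hsub' : ∀ i, ∀ C ∈ P i, C ⊆ A i := fun i C hC =>
        (hP i).2.2 ▸ Set.subset_sUnion_of_mem (Finset.mem_coe.2 hC)
      have hdis : (s : Set (Σ _ : Fin n, Set Ω)).PairwiseDisjoint (fun x => x.2) := by
        rintro ⟨i, C⟩ hC ⟨j, D⟩ hD hne
        have hC' : C ∈ P i := by simpa [s] using hC
        have hD' : D ∈ P j := by simpa [s] using hD
        by_cases hij : i = j
        · subst hij
          exact (hP i).2.1 hC' hD' (fun h => hne (by rw [h]))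
        · exact (hd hij).mono (hsub' i C hC') (hsub' j D hD')
      have hp := isPartition_image (S := S) s (fun x => x.2)
        (fun x hx => (hP x.1).1 (by simpa [s] using hx)) hdis
      have hU' : (⋃ x ∈ s, x.2) = ⋃ i, A i := by
        ext y
        simp only [Set.mem_iUnion, s, Finset.mem_sigma, Finset.mem_univ, true_and]
        constructor
        · rintro ⟨x, hx, hy⟩
          exact ⟨x.1, hsub' _ _ hx hy⟩
        · rintro ⟨i, hy⟩
          rw [← (hP i).2.2] at hy
          obtain ⟨C, hC, hy⟩ := hy
          exact ⟨⟨i, C⟩, hC, hy⟩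
      rw [hU'] at hp
      have h1 := sum_le_supR (hub _ hU) hp
      rw [Finset.sum_image_of_disjoint (g := g) hg0 hdis, Finset.sum_sigma] at h1
      have h2 : ∑ i, (supR S g (A i) - ε / (n + 1)) ≤ ∑ i, ∑ C ∈ P i, g C :=
        Finset.sum_le_sum fun i _ => (hlt i).le
      rw [Finset.sum_sub_distrib] at h2
      have h3 : ∑ _i : Fin n, ε / ((n : ℝ) + 1) ≤ ε := by
        rw [Finset.sum_const, Finset.card_univ, Fintype.card_fin, nsmul_eq_mul, ← mul_div_assoc,
          div_le_iff₀ (by positivity)]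
        nlinarith
      linarith

/-- The complement in `⋃ n, A n` of the first `n` members of the disjoint family `A` splits into
finitely many elements of `S`; the same splitting `D` expresses the remainder of every charge. -/
lemma exists_remainder (hS : IsSetSemiring S) {A : ℕ → Set Ω} (hA : ∀ n, A n ∈ S)
    (hd : Pairwise (Function.onFun Disjoint A)) (hU : (⋃ n, A n) ∈ S) (n : ℕ) :
    ∃ D : Finset (Set Ω), ↑D ⊆ S ∧ ∀ m : Set Ω → ℝ, IsRealCharge S m →
      m (⋃ n, A n) = ∑ i ∈ Finset.range n, m (A i) + ∑ C ∈ D, m C := by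
  classical
  have hdis : ((Finset.range n : Finset ℕ) : Set ℕ).PairwiseDisjoint A :=
    fun i _ j _ hij => hd hij
  obtain ⟨h1, h2, -⟩ := isPartition_image (S := S) (Finset.range n) A (fun i _ => hA i) hdis
  set I := (Finset.range n).image A
  have hIs : ∀ t ∈ I, t ⊆ ⋃ n, A n := by
    intro t ht
    obtain ⟨i, -, rfl⟩ := Finset.mem_image.1 ht
    exact Set.subset_iUnion A i
  refine ⟨hS.disjointOfDiffUnion hU h1, hS.disjointOfDiffUnion_subset hU h1, fun m hm => ?_⟩
  have hp : IsPartition S (⋃ n, A n) (I ∪ hS.disjointOfDiffUnion hU h1) := by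
    refine ⟨?_, ?_, ?_⟩
    · rw [Finset.coe_union]
      exact Set.union_subset h1 (hS.disjointOfDiffUnion_subset hU h1)
    · rw [Finset.coe_union]
      exact hS.pairwiseDisjoint_union_disjointOfDiffUnion hU h1 h2
    · rw [Finset.coe_union, Set.sUnion_union]
      exact hS.sUnion_union_sUnion_disjointOfDiffUnion_of_subset hU h1 hIs
  rw [hm.sum_partition hU hp, Finset.sum_union (hS.disjoint_disjointOfDiffUnion hU h1),
    Finset.sum_image_of_disjoint (g := m) hm.empty hdis]

/-- A nonnegative charge below a countably additive one is countably additive: its remainders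
are squeezed between `0` and those of the larger charge. -/
lemma countablyAdditive_of_le (hS : IsSetSemiring S) {τ m : Set Ω → ℝ} (hτ : IsRealCharge S τ)
    (hm : IsRealCharge S m) (hmca : CountablyAdditiveR S m) (h0 : ∀ A ∈ S, 0 ≤ τ A)
    (hle : ∀ A ∈ S, τ A ≤ m A) : CountablyAdditiveR S τ := by
  intro A hA hd hU
  rw [hasSum_iff_tendsto_nat_of_nonneg (fun i => h0 _ (hA i))]
  have hlim := (hmca A hA hd hU).tendsto_sum_nat
  have hlow : Filter.Tendsto
      (fun n => τ (⋃ n, A n) - (m (⋃ n, A n) - ∑ i ∈ Finset.range n, m (A i)))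
      Filter.atTop (nhds (τ (⋃ n, A n))) := by
    simpa using (hlim.const_sub (m (⋃ n, A n))).const_sub (τ (⋃ n, A n))
  refine tendsto_of_tendsto_of_tendsto_of_le_of_le hlow tendsto_const_nhds ?_ ?_ <;> intro n
  · obtain ⟨D, hD, hsum⟩ := exists_remainder hS hA hd hU n
    have h1 := hsum τ hτ
    have h2 := hsum m hm
    have h3 : ∑ C ∈ D, τ C ≤ ∑ C ∈ D, m C := Finset.sum_le_sum fun C hC => hle C (hD hC)
    dsimp only
    linarith
  · obtain ⟨D, hD, hsum⟩ := exists_remainder hS hA hd hU n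
    have h1 := hsum τ hτ
    have h3 : 0 ≤ ∑ C ∈ D, τ C := Finset.sum_nonneg fun C hC => h0 C (hD hC)
    dsimp only
    linarith

lemma coe_sum_ereal {ι : Type*} (s : Finset ι) (f : ι → ℝ) :
    ((∑ i ∈ s, f i : ℝ) : EReal) = ∑ i ∈ s, (f i : EReal) := by
  classical
  induction s using Finset.induction_on with
  | empty => simp
  | insert a s ha ih => rw [Finset.sum_insert ha, Finset.sum_insert ha, EReal.coe_add, ih]

lemma coe_ciSup_ereal {J : Type*} [Nonempty J] {f : J → ℝ} (hf : BddAbove (Set.range f)) :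
    ((⨆ j, f j : ℝ) : EReal) = ⨆ j, (f j : EReal) := by
  apply le_antisymm
  · induction h : (⨆ j, (f j : EReal)) with
    | bot =>
      have := le_iSup (fun j => (f j : EReal)) (Classical.arbitrary J)
      rw [h] at this
      simp at this
    | top => exact le_top
    | coe r =>
      refine EReal.coe_le_coe_iff.2 (ciSup_le fun j => ?_)
      rw [← EReal.coe_le_coe_iff, ← h]
      exact le_iSup (fun j => (f j : EReal)) j
  · exact iSup_le fun j => EReal.coe_le_coe_iff.2 (le_ciSup hf j)

end Helpers

/-- the supremum of a family of finite signed measures dominated by a finite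
signed measure is a finite signed measure. -/
theorem statement6 {Ω J : Type*} [Nonempty J] (S : Set (Set Ω))
    (hS : MeasureTheory.IsSetSemiring S) (ν : J → Set Ω → ℝ)
    (hν : ∀ j, IsRealCharge S (ν j)) (hνca : ∀ j, CountablyAdditiveR S (ν j))
    (μ : Set Ω → ℝ) (hμ : IsRealCharge S μ) (hμca : CountablyAdditiveR S μ)
    (hdom : ∀ j, ∀ A ∈ S, ν j A ≤ μ A) :
    ∃ ρ : Set Ω → ℝ, IsRealCharge S ρ ∧ CountablyAdditiveR S ρ ∧
      ∀ A ∈ S, (ρ A : EReal) = supFun S (fun j => toE (ν j)) A := by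
  set g : Set Ω → ℝ := fun C => ⨆ j, ν j C with hg
  have hbdd : ∀ C ∈ S, BddAbove (Set.range fun j => ν j C) := fun C hC =>
    ⟨μ C, by rintro _ ⟨j, rfl⟩; exact hdom j C hC⟩
  have hνg : ∀ j, ∀ C ∈ S, ν j C ≤ g C := fun j C hC => le_ciSup (hbdd C hC) j
  have hg0 : g ∅ = 0 := by simp [hg, (hν _).empty]
  have hub : ∀ A ∈ S, ∀ P, IsPartition S A P → ∑ C ∈ P, g C ≤ μ A := by
    intro A hA P hP
    rw [hμ.sum_partition hA hP]
    exact Finset.sum_le_sum fun C hC => ciSup_le fun j => hdom j C (hP.1 hC)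
  have hsub : ∀ (n : ℕ) (A : Fin n → Set Ω), (∀ i, A i ∈ S) →
      Pairwise (Function.onFun Disjoint A) → (⋃ i, A i) ∈ S → g (⋃ i, A i) ≤ ∑ i, g (A i) := by
    intro n A hA hd hU
    refine ciSup_le fun j => ?_
    rw [(hν j).additive n A hA hd hU]
    exact Finset.sum_le_sum fun i _ => hνg j _ (hA i)
  have hρ := isRealCharge_supR hS hg0 hub hsub
  have hgρ : ∀ A ∈ S, g A ≤ supR S g A := by
    intro A hA
    simpa using sum_le_supR (hub A hA) (isPartition_singleton hA)
  refine ⟨supR S g, hρ, ?_, ?_⟩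
  -- Subtracting one `ν j` makes the supremum a nonnegative charge.
  · let j : J := Classical.arbitrary J
    have hm : CountablyAdditiveR S (fun A => μ A - ν j A) := fun A hA hd hU =>
      (hμca A hA hd hU).sub (hνca j A hA hd hU)
    have hτ := countablyAdditive_of_le hS (hρ.sub (hν j)) (hμ.sub (hν j)) hm
      (fun A hA => sub_nonneg.2 ((hνg j A hA).trans (hgρ A hA)))
      (fun A hA => sub_le_sub_right (supR_le hA (hub A hA)) _)
    intro A hA hd hU
    simpa using (hτ A hA hd hU).add (hνca j A hA hd hU)
  · intro A hA
    have hsum : ∀ P, IsPartition S A P →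
        ∑ C ∈ P, ⨆ j, toE (ν j) C = ((∑ C ∈ P, g C : ℝ) : EReal) := by
      intro P hP
      rw [coe_sum_ereal]
      exact Finset.sum_congr rfl fun C hC => (coe_ciSup_ereal (hbdd C (hP.1 hC))).symm
    have hle : ∀ P, IsPartition S A P →
        ((∑ C ∈ P, g C : ℝ) : EReal) ≤ supFun S (fun j => toE (ν j)) A := by
      intro P hP
      rw [← hsum P hP]
      exact le_iSup₂ (f := fun P (_ : IsPartition S A P) => ∑ C ∈ P, ⨆ j, toE (ν j) C) P hP
    apply le_antisymm
    · induction h : supFun S (fun j => toE (ν j)) A with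
      | bot =>
        have := hle _ (isPartition_singleton hA)
        rw [h] at this
        exact absurd (le_bot_iff.1 this) (EReal.coe_ne_bot _)
      | top => exact le_top
      | coe r =>
        refine EReal.coe_le_coe_iff.2 (supR_le hA fun P hP => ?_)
        rw [← EReal.coe_le_coe_iff, ← h]
        exact hle P hP
    · refine iSup₂_le fun P hP => ?_
      rw [hsum P hP]
      exact EReal.coe_le_coe_iff.2 (sum_le_supR (hub A hA) hP)

end SignedCharges
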